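/- fN converges to f in all C^j norms uniformly on E: for every j ∈ ℕ and every ε > 0 there exists N₀ ∈ ℕ such that for all N ≥ N₀ and all s ∈ E, ‖iteratedFDeriv ℝ j (f - fN) s‖ < ε. (This makes precise the paper's assertion that in any neighborhood of the connection defined from f there lies a connection defined from f^N.) -/

import Mathlib

/-!
The factor `exp (-1 / ‖x - p‖ ^ 2)` is flat at `p`, so on a ball around `p` its `i`-th derivative is
bounded by a multiple of `‖x - p‖ ^ l`, for every `l`. A bump rescaled to radius `r` and centred
within `O(r)` of `p` lives where `‖x - p‖ = O(r)`, and its `l`-th derivative is `O(r⁻¹ ^ l)`.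
In the Leibniz formula for the product the two powers of `r` cancel, so that each derivative of the
product is bounded independently of the bump. The weights of the series being summable, the
Weierstrass M-test applies to every derivative.
-/

open Filter Metric Set
open scoped ContDiff

section Flat

variable {E F G : Type*} [NormedAddCommGroup E] [NormedSpace ℝ E] [NormedAddCommGroup F]
  [NormedSpace ℝ F] [NormedAddCommGroup G] [NormedSpace ℝ G]

/-- A function is flat at a point if it vanishes there together with all its derivatives. Since
`iteratedFDeriv` is zero where derivatives fail to exist, this is meaningful for smooth functions
only. -/
def IsFlatAt (f : E → F) (p : E) : Prop :=
  ∀ i : ℕ, iteratedFDeriv ℝ i f p = 0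

theorem IsFlatAt.comp {g : F → G} {f : E → F} {p : E} (hflat : IsFlatAt g (f p))
    (hg : ContDiff ℝ ∞ g) (hf : ContDiff ℝ ∞ f) : IsFlatAt (g ∘ f) p := by
  intro n
  obtain ⟨D, hD⟩ : ∃ D : ℝ, ∀ i, 1 ≤ i → i ≤ n → ‖iteratedFDeriv ℝ i f p‖ ≤ D ^ i := by
    refine ⟨1 + ∑ i ∈ Finset.range (n + 1), ‖iteratedFDeriv ℝ i f p‖, fun i hi hin ↦ ?_⟩
    have hle : ‖iteratedFDeriv ℝ i f p‖ ≤ ∑ i ∈ Finset.range (n + 1), ‖iteratedFDeriv ℝ i f p‖ :=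
      Finset.single_le_sum (f := fun i ↦ ‖iteratedFDeriv ℝ i f p‖) (fun _ _ ↦ norm_nonneg _)
        (Finset.mem_range_succ_iff.2 hin)
    exact (hle.trans (by linarith)).trans
      (le_self_pow₀ (le_add_of_nonneg_right (by positivity)) (by lia))
  simpa using norm_iteratedFDeriv_comp_le hg hf (mod_cast le_top) p (C := 0)
    (fun i _ ↦ by rw [hflat i, norm_zero]) hD

theorem isFlatAt_of_mem_closure_of_eqOn_zero {f : E → F} {U : Set E} {p : E}
    (hf : ContDiff ℝ ∞ f) (hU : IsOpen U) (hfU : EqOn f 0 U) (hp : p ∈ closure U) :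
    IsFlatAt f p := by
  intro i
  have hderiv : EqOn (iteratedFDeriv ℝ i f) 0 U := fun x hx ↦ by
    simpa using ((hfU.eventuallyEq_of_mem (hU.mem_nhds hx)).iteratedFDeriv ℝ i).eq_of_nhds
  exact hderiv.closure (hf.continuous_iteratedFDeriv (mod_cast le_top)) continuous_const hp

/-- Flatness propagates to a bound of every order by the mean value inequality, applied on the ball
of radius `‖x - p‖`, where the next derivative is already known to be small. -/
theorem IsFlatAt.exists_norm_iteratedFDeriv_le_mul_pow [ProperSpace E] {f : E → F} {p : E}
    (hflat : IsFlatAt f p) (hf : ContDiff ℝ ∞ f) (R : ℝ) (i m : ℕ) :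
    ∃ C ≥ 0, ∀ x ∈ closedBall p R, ‖iteratedFDeriv ℝ i f x‖ ≤ C * ‖x - p‖ ^ m := by
  induction m generalizing i with
  | zero =>
    obtain ⟨C, hC⟩ := (isCompact_closedBall p R).exists_bound_of_continuousOn
      (hf.continuous_iteratedFDeriv (m := i) (mod_cast le_top)).continuousOn
    exact ⟨|C|, abs_nonneg C, fun x hx ↦ by simpa using (hC x hx).trans (le_abs_self C)⟩
  | succ m ih =>
    obtain ⟨C, hC0, hC⟩ := ih (i + 1)
    refine ⟨C, hC0, fun x hx ↦ ?_⟩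
    have hfderiv : ∀ y ∈ closedBall p ‖x - p‖,
        ‖fderiv ℝ (iteratedFDeriv ℝ i f) y‖ ≤ C * ‖x - p‖ ^ m := fun y hy ↦ by
      rw [mem_closedBall_iff_norm] at hx hy
      calc ‖fderiv ℝ (iteratedFDeriv ℝ i f) y‖
          = ‖iteratedFDeriv ℝ (i + 1) f y‖ := norm_fderiv_iteratedFDeriv
        _ ≤ C * ‖y - p‖ ^ m := hC y (mem_closedBall_iff_norm.2 (hy.trans hx))
        _ ≤ C * ‖x - p‖ ^ m := by gcongr
    have hmean := (convex_closedBall p ‖x - p‖).norm_image_sub_le_of_norm_fderiv_le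
      (fun y _ ↦ hf.differentiable_iteratedFDeriv (mod_cast WithTop.coe_lt_top i) y) hfderiv
      (mem_closedBall_self (norm_nonneg _)) (mem_closedBall_iff_norm.2 le_rfl)
    rwa [hflat i, sub_zero, mul_assoc, ← pow_succ] at hmean

theorem isFlatAt_expNegInvGlue : IsFlatAt expNegInvGlue 0 :=
  isFlatAt_of_mem_closure_of_eqOn_zero expNegInvGlue.contDiff isOpen_Iio
    (fun _ hx ↦ expNegInvGlue.zero_of_nonpos (mem_Iio.1 hx).le) (by simp)

end Flat

section InnerProductSpace

variable {E : Type*} [NormedAddCommGroup E] [InnerProductSpace ℝ E]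

theorem contDiff_norm_sub_sq (p : E) : ContDiff ℝ ∞ fun x : E ↦ ‖x - p‖ ^ 2 :=
  (contDiff_id.sub contDiff_const).norm_sq ℝ

theorem contDiff_expNegInvGlue_norm_sub_sq (p : E) :
    ContDiff ℝ ∞ fun x : E ↦ expNegInvGlue (‖x - p‖ ^ 2) :=
  expNegInvGlue.contDiff.comp (contDiff_norm_sub_sq p)

theorem isFlatAt_expNegInvGlue_norm_sub_sq (p : E) :
    IsFlatAt (fun x : E ↦ expNegInvGlue (‖x - p‖ ^ 2)) p :=
  IsFlatAt.comp (g := expNegInvGlue) (by simpa using isFlatAt_expNegInvGlue)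
    expNegInvGlue.contDiff (contDiff_norm_sub_sq p)

end InnerProductSpace

theorem eq_expNegInvGlue_norm_sub_sq {E : Type*} [NormedAddCommGroup E] {φ : E → ℝ} {p : E}
    (hφ : ∀ x, x ≠ p → φ x = Real.exp (-1 / ‖x - p‖ ^ 2)) (hφp : φ p = 0) :
    φ = fun x ↦ expNegInvGlue (‖x - p‖ ^ 2) := by
  ext x
  rcases eq_or_ne x p with rfl | hx
  · simp [hφp]
  · have hpos : 0 < ‖x - p‖ ^ 2 := pow_pos (norm_sub_pos_iff.2 hx) 2
    rw [hφ x hx, expNegInvGlue, if_neg hpos.not_ge, neg_div, one_div]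

section Rescaling

variable {E F : Type*} [NormedAddCommGroup E] [NormedSpace ℝ E] [NormedAddCommGroup F]
  [NormedSpace ℝ F]

theorem norm_iteratedFDeriv_comp_smul_sub {h : E → F} {i : ℕ} (hh : ContDiff ℝ i h) (a : ℝ)
    (c x : E) :
    ‖iteratedFDeriv ℝ i (fun y ↦ h (a • (y - c))) x‖ =
      |a| ^ i * ‖iteratedFDeriv ℝ i h (a • (x - c))‖ := by
  rw [iteratedFDeriv_comp_sub (f := fun y ↦ h (a • y)), iteratedFDeriv_comp_const_smul a hh,
    norm_smul, norm_pow, Real.norm_eq_abs]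

theorem exists_norm_iteratedFDeriv_le_of_hasCompactSupport {h : E → F} {i : ℕ}
    (hh : ContDiff ℝ i h) (hsupp : HasCompactSupport h) :
    ∃ C, ∀ x, ‖iteratedFDeriv ℝ i h x‖ ≤ C :=
  (hsupp.iteratedFDeriv (𝕜 := ℝ) i).exists_bound_of_continuous
    (hh.continuous_iteratedFDeriv le_rfl)

variable [ProperSpace E] {φ : E → ℝ} {h : E → F} {p : E}

theorem IsFlatAt.exists_norm_iteratedFDeriv_mul_norm_rescale_le (hflat : IsFlatAt φ p)
    (hφ : ContDiff ℝ ∞ φ) (hh : ContDiff ℝ ∞ h) (hsupp : HasCompactSupport h) (R K : ℝ)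
    (i l : ℕ) :
    ∃ C, ∀ (r : ℝ) (c : E), 0 < r → r ≤ R → ‖c - p‖ ≤ K * r → ∀ x,
      ‖iteratedFDeriv ℝ i φ x‖ * ‖iteratedFDeriv ℝ l (fun y ↦ h (r⁻¹ • (y - c))) x‖ ≤ C := by
  obtain ⟨ρ, hρ⟩ := hsupp.isCompact.isBounded.subset_closedBall 0
  obtain ⟨A, hA0, hA⟩ := hflat.exists_norm_iteratedFDeriv_le_mul_pow hφ (|K + ρ| * R) i l
  have hhl : ContDiff ℝ l h := hh.of_le (mod_cast le_top)
  obtain ⟨B, hB⟩ := exists_norm_iteratedFDeriv_le_of_hasCompactSupport hhl hsupp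
  refine ⟨A * |K + ρ| ^ l * B, fun r c hr hrR hc x ↦ ?_⟩
  have hB0 : 0 ≤ B := (norm_nonneg _).trans (hB 0)
  rw [norm_iteratedFDeriv_comp_smul_sub hhl, abs_of_pos (inv_pos.2 hr)]
  by_cases hx : iteratedFDeriv ℝ l h (r⁻¹ • (x - c)) = 0
  · rw [hx, norm_zero, mul_zero, mul_zero]
    positivity
  have hxc : ‖x - c‖ ≤ ρ * r := by
    have hmem := hρ (support_iteratedFDeriv_subset l hx)
    rwa [mem_closedBall_zero_iff, norm_smul, norm_inv, Real.norm_of_nonneg hr.le,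
      inv_mul_le_iff₀' hr] at hmem
  have hxp : ‖x - p‖ ≤ |K + ρ| * r :=
    calc ‖x - p‖ ≤ ‖x - c‖ + ‖c - p‖ := norm_sub_le_norm_sub_add_norm_sub x c p
      _ ≤ (K + ρ) * r := by linarith
      _ ≤ |K + ρ| * r := by gcongr; exact le_abs_self _
  have hball : x ∈ closedBall p (|K + ρ| * R) :=
    mem_closedBall_iff_norm.2 (hxp.trans (by gcongr))
  calc ‖iteratedFDeriv ℝ i φ x‖ * (r⁻¹ ^ l * ‖iteratedFDeriv ℝ l h (r⁻¹ • (x - c))‖)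
      ≤ A * (|K + ρ| * r) ^ l * (r⁻¹ ^ l * B) := by
        gcongr
        · exact (hA x hball).trans (by gcongr)
        · exact hB _
    _ = A * |K + ρ| ^ l * B * (r * r⁻¹) ^ l := by ring
    _ = A * |K + ρ| ^ l * B := by rw [mul_inv_cancel₀ hr.ne', one_pow, mul_one]

theorem IsFlatAt.exists_norm_iteratedFDeriv_smul_rescale_le (hflat : IsFlatAt φ p)
    (hφ : ContDiff ℝ ∞ φ) (hh : ContDiff ℝ ∞ h) (hsupp : HasCompactSupport h) (R K : ℝ) (j : ℕ) :
    ∃ C, ∀ (r : ℝ) (c : E), 0 < r → r ≤ R → ‖c - p‖ ≤ K * r → ∀ x,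
      ‖iteratedFDeriv ℝ j (fun y ↦ φ y • h (r⁻¹ • (y - c))) x‖ ≤ C := by
  choose C hC using hflat.exists_norm_iteratedFDeriv_mul_norm_rescale_le hφ hh hsupp R K
  refine ⟨∑ i ∈ Finset.range (j + 1), j.choose i * C i (j - i), fun r c hr hrR hc x ↦ ?_⟩
  have hrescale : ContDiff ℝ ∞ fun y ↦ h (r⁻¹ • (y - c)) := by fun_prop
  refine (norm_iteratedFDeriv_smul_le hφ hrescale x (mod_cast le_top)).trans ?_
  refine Finset.sum_le_sum fun i _ ↦ ?_
  rw [mul_assoc]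
  exact mul_le_mul_of_nonneg_left (hC i (j - i) r c hr hrR hc x) (Nat.cast_nonneg _)

end Rescaling

theorem eventually_norm_iteratedFDeriv_tsum_sub_sum_lt {E F : Type*} [NormedAddCommGroup E]
    [NormedSpace ℝ E] [NormedAddCommGroup F] [NormedSpace ℝ F] [CompleteSpace F] {g : ℕ → E → F}
    {v : ℕ → ℕ → ℝ} (hg : ∀ k, ContDiff ℝ ∞ (g k)) (hv : ∀ i, Summable (v i))
    (hgv : ∀ i k x, ‖iteratedFDeriv ℝ i (g k) x‖ ≤ v i k) (j : ℕ) {ε : ℝ} (hε : 0 < ε) :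
    ∀ᶠ N in atTop, ∀ x, ‖iteratedFDeriv ℝ j
      ((fun x ↦ ∑' k, g k x) - fun x ↦ ∑ k ∈ Finset.range N, g k x) x‖ < ε := by
  have hgj : ∀ k, ContDiff ℝ j (g k) := fun k ↦ (hg k).of_le (mod_cast le_top)
  have htsum_smooth : ContDiff ℝ j fun x ↦ ∑' k, g k x :=
    contDiff_tsum (N := j) hgj (fun i _ ↦ hv i) fun i k x _ ↦ hgv i k x
  have htsum_deriv := iteratedFDeriv_tsum (N := j) hgj (fun i _ ↦ hv i)
    (fun i k x _ ↦ hgv i k x) le_rfl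
  filter_upwards [tendstoUniformly_iff.1 (tendstoUniformly_tsum_nat (hv j) (hgv j)) ε hε]
    with N hN x
  have hsum_smooth : ContDiff ℝ j fun x ↦ ∑ k ∈ Finset.range N, g k x :=
    ContDiff.sum fun k _ ↦ hgj k
  rw [iteratedFDeriv_sub_apply htsum_smooth.contDiffAt hsum_smooth.contDiffAt, htsum_deriv,
    iteratedFDeriv_sum fun k _ ↦ hgj k, Finset.sum_apply, ← dist_eq_norm]
  exact hN x

theorem stmt_10_general {E V : Type*} [NormedAddCommGroup E] [NormedSpace ℝ E] [ProperSpace E]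
    [NormedAddCommGroup V] [NormedSpace ℝ V] [CompleteSpace V]
    {h : E → V} (hh : ContDiff ℝ ∞ h) (hsupp : HasCompactSupport h)
    {φ : E → ℝ} {p : E} (hφ : ContDiff ℝ ∞ φ) (hflat : IsFlatAt φ p)
    {s : ℕ → E} {r : ℕ → ℝ} {R K : ℝ} (hr : ∀ k, 0 < r k) (hrR : ∀ k, r k ≤ R)
    (hs : ∀ k, ‖s k - p‖ ≤ K * r k)
    {f : ℕ → E → V} (hf : ∀ k x, f k x = r k • h ((r k)⁻¹ • (x - s k)))
    {a : ℕ → ℝ} (ha : Summable fun k ↦ a k * r k)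
    {fN : ℕ → E → V} (hfN : ∀ N x, fN N x = φ x • ∑ k ∈ Finset.range (N + 1), a k • f k x)
    {F : E → V} (hF : ∀ x, F x = φ x • ∑' k, a k • f k x) (j : ℕ) (ε : ℝ) (hε : 0 < ε) :
    ∃ N₀ : ℕ, ∀ N ≥ N₀, ∀ x, ‖iteratedFDeriv ℝ j (F - fN N) x‖ < ε := by
  let u : ℕ → E → V := fun k x ↦ φ x • h ((r k)⁻¹ • (x - s k))
  have hu : ∀ k, ContDiff ℝ ∞ (u k) := fun k ↦ by fun_prop
  choose C hC using hflat.exists_norm_iteratedFDeriv_smul_rescale_le hφ hh hsupp R K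
  have hterm : ∀ k x, φ x • a k • f k x = (a k * r k) • u k x := fun k x ↦ by
    rw [hf, smul_smul (a k), smul_comm]
  have hbound : ∀ i k x, ‖iteratedFDeriv ℝ i (fun x ↦ (a k * r k) • u k x) x‖ ≤
      |a k * r k| * C i := fun i k x ↦ by
    rw [iteratedFDeriv_const_smul_apply' ((hu k).of_le (mod_cast le_top)).contDiffAt, norm_smul,
      Real.norm_eq_abs]
    gcongr
    exact hC i (r k) (s k) (hr k) (hrR k) (hs k) x
  obtain ⟨N₀, hN₀⟩ := eventually_atTop.1 <| eventually_norm_iteratedFDeriv_tsum_sub_sum_lt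
    (fun k ↦ (hu k).const_smul (a k * r k)) (fun i ↦ ha.abs.mul_right (C i)) hbound j hε
  refine ⟨N₀, fun N hN x ↦ ?_⟩
  have hF_eq : F = fun x ↦ ∑' k, (a k * r k) • u k x := funext fun x ↦ by
    simp only [hF, ← tsum_const_smul'', hterm]
  have hfN_eq : fN N = fun x ↦ ∑ k ∈ Finset.range (N + 1), (a k * r k) • u k x :=
    funext fun x ↦ by simp only [hfN, Finset.smul_sum, hterm]
  rw [hF_eq, hfN_eq]
  exact hN₀ (N + 1) (by lia) x

theorem stmt_10 (n : ℕ) (hn : 1 ≤ n)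
    (h : EuclideanSpace ℝ (Fin n) → ℝ) (hsmooth : ContDiff ℝ (⊤ : ℕ∞) h)
    (hpos : ∀ x : EuclideanSpace ℝ (Fin n), ‖x‖ < 1 → 0 < h x)
    (hzero : ∀ x : EuclideanSpace ℝ (Fin n), 1 ≤ ‖x‖ → h x = 0)
    (sinf z : EuclideanSpace ℝ (Fin n)) (hz : z ≠ 0)
    (s : ℕ → EuclideanSpace ℝ (Fin n)) (r : ℕ → ℝ)
    (hs : ∀ k : ℕ, s k = sinf - (3 * (2 : ℝ) ^ (-(k : ℤ))) • z)
    (hr : ∀ k : ℕ, r k = (2 : ℝ) ^ (-(k : ℤ)) * ‖z‖)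
    (f : ℕ → EuclideanSpace ℝ (Fin n) → ℝ)
    (hf : ∀ (k : ℕ) (x : EuclideanSpace ℝ (Fin n)),
      f k x = r k * h ((r k)⁻¹ • (x - s k)))
    (Einf : EuclideanSpace ℝ (Fin n) → ℝ)
    (hEinf : ∀ x : EuclideanSpace ℝ (Fin n), x ≠ sinf →
      Einf x = Real.exp (-1 / ‖x - sinf‖ ^ 2))
    (hEinf0 : Einf sinf = 0)
    (fN : ℕ → EuclideanSpace ℝ (Fin n) → ℝ)
    (hfN : ∀ (N : ℕ) (x : EuclideanSpace ℝ (Fin n)),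
      fN N x = Einf x * ∑ k ∈ Finset.range (N + 1), (4 : ℝ) ^ (-(k : ℤ)) * f k x)
    (F : EuclideanSpace ℝ (Fin n) → ℝ)
    (hF : ∀ x : EuclideanSpace ℝ (Fin n),
      F x = Einf x * ∑' k : ℕ, (4 : ℝ) ^ (-(k : ℤ)) * f k x) :
    ∀ (j : ℕ) (ε : ℝ), 0 < ε → ∃ N₀ : ℕ, ∀ N ≥ N₀,
      ∀ x : EuclideanSpace ℝ (Fin n), ‖iteratedFDeriv ℝ j (F - fN N) x‖ < ε := by
  have hzpos : 0 < ‖z‖ := norm_pos_iff.2 hz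
  have hsupp : HasCompactSupport h := .intro (isCompact_closedBall 0 1) fun x hx ↦
    hzero x (not_le.1 (mt mem_closedBall_zero_iff.2 hx)).le
  have hr_pos : ∀ k, 0 < r k := fun k ↦ by rw [hr]; positivity
  have hr_le : ∀ k, r k ≤ ‖z‖ := fun k ↦ by
    rw [hr]
    exact mul_le_of_le_one_left hzpos.le (zpow_le_one_of_nonpos₀ one_le_two (by simp))
  have hcenter : ∀ k, ‖s k - sinf‖ ≤ 3 * r k := fun k ↦ by
    rw [hs, hr, sub_sub_cancel_left, norm_neg, norm_smul, Real.norm_of_nonneg (by positivity),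
      mul_assoc]
  have hweight : Summable fun k : ℕ ↦ (4 : ℝ) ^ (-(k : ℤ)) * r k := by
    simp only [hr, zpow_neg, zpow_natCast, ← inv_pow, ← mul_assoc, ← mul_pow]
    exact (summable_geometric_of_lt_one (by norm_num) (by norm_num)).mul_right _
  have hEinf_eq := eq_expNegInvGlue_norm_sub_sq hEinf hEinf0
  exact stmt_10_general hsmooth hsupp (hEinf_eq ▸ contDiff_expNegInvGlue_norm_sub_sq sinf)
    (hEinf_eq ▸ isFlatAt_expNegInvGlue_norm_sub_sq sinf) hr_pos hr_le hcenter hf hweight hfN hF
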